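/- For all positive integers a and b with a ≠ b, R(a,b) = 0. -/

import Mathlib

/-- The Beta function `B(a,b) = ∫₀¹ t^(a-1) (1-t)^(b-1) dt`. -/
noncomputable def betaFn (a b : ℝ) : ℝ := ∫ t in (0:ℝ)..1, t ^ (a - 1) * (1 - t) ^ (b - 1)

/-- `I(a,b)`: the probability that a `Beta(a,b)` random variable is `≥ 1/2`. -/
noncomputable def I (a b : ℝ) : ℝ :=
  (1 / betaFn a b) * ∫ t in (1/2 : ℝ)..1, t ^ (a - 1) * (1 - t) ^ (b - 1)

/-- `h(x) = max (x, 1-x)`. -/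
noncomputable def hFn (x : ℝ) : ℝ := max x (1 - x)

/-- Expected stage-wise reward. -/
noncomputable def R (a b : ℝ) : ℝ :=
  a / (a + b) * (hFn (I (a + 1) b) - hFn (I a b)) +
    b / (a + b) * (hFn (I a (b + 1)) - hFn (I a b))

/-- Optimistic knowledge-gradient reward. -/
noncomputable def Rplus (a b : ℝ) : ℝ :=
  max (hFn (I (a + 1) b) - hFn (I a b)) (hFn (I a (b + 1)) - hFn (I a b))

/-- Pessimistic knowledge-gradient reward. -/
noncomputable def Rminus (a b : ℝ) : ℝ :=
  min (hFn (I (a + 1) b) - hFn (I a b)) (hFn (I a (b + 1)) - hFn (I a b))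

/-!
Write `p = a / (a + b)`, `q = b / (a + b)`. Splitting `1 = t + (1 - t)` inside the incomplete Beta
integral, together with the recurrence `B(a + 1, b) = p * B(a, b)`, gives the martingale identity
`I(a, b) = p * I(a + 1, b) + q * I(a, b + 1)`. By the reflection `t ↦ 1 - t` and a pointwise
comparison of densities on `[1/2, 1]`, `I(a, b)` lies on the side of `1/2` determined by the sign of
`a - b`. When `a` and `b` differ by at least one, one further observation cannot reverse that sign,
so all three values lie on one side of `1/2`, where `h` is affine, and the expected reward vanishes.
-/

open MeasureTheory Set

/-- The unnormalised density `t ^ (a - 1) * (1 - t) ^ (b - 1)` of the `Beta(a, b)` distribution. -/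
noncomputable def betaWeight (a b t : ℝ) : ℝ := t ^ (a - 1) * (1 - t) ^ (b - 1)

/-- The upper incomplete Beta function `∫ₓ¹ t ^ (a - 1) * (1 - t) ^ (b - 1) dt`. -/
noncomputable def upperBeta (a b x : ℝ) : ℝ := ∫ t in x..1, betaWeight a b t

lemma upperBeta_zero (a b : ℝ) : upperBeta a b 0 = betaFn a b := rfl

lemma I_eq_upperBeta_div (a b : ℝ) : I a b = upperBeta a b (1 / 2) / betaFn a b :=
  one_div_mul_eq_div _ _

section betaWeight

variable {a b t x y : ℝ}

lemma betaWeight_one_sub (a b t : ℝ) : betaWeight a b (1 - t) = betaWeight b a t := by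
  rw [betaWeight, betaWeight, sub_sub_cancel, mul_comm]

lemma ofReal_betaWeight (a b : ℝ) (ht : t ∈ Icc 0 1) :
    (betaWeight a b t : ℂ) = (t : ℂ) ^ ((a : ℂ) - 1) * (1 - (t : ℂ)) ^ ((b : ℂ) - 1) := by
  rw [betaWeight, Complex.ofReal_mul, Complex.ofReal_cpow ht.1,
    Complex.ofReal_cpow (sub_nonneg.2 ht.2)]
  push_cast
  rfl

lemma betaWeight_pos (a b : ℝ) (ht : t ∈ Ioo 0 1) : 0 < betaWeight a b t :=
  mul_pos (Real.rpow_pos_of_pos ht.1 _) (Real.rpow_pos_of_pos (sub_pos.2 ht.2) _)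

lemma betaWeight_add_one_left (a b : ℝ) (ht : t ≠ 0) :
    betaWeight (a + 1) b t = t * betaWeight a b t := by
  rw [betaWeight, betaWeight, add_sub_right_comm, Real.rpow_add_one ht]
  ring

lemma betaWeight_add_one_right (a b : ℝ) (ht : t ≠ 1) :
    betaWeight a (b + 1) t = (1 - t) * betaWeight a b t := by
  rw [← betaWeight_one_sub, betaWeight_add_one_left b a (sub_ne_zero.2 ht.symm), betaWeight_one_sub]

lemma betaWeight_le_betaWeight_swap (hab : b ≤ a) (ht : t ∈ Ico (1 / 2) 1) :
    betaWeight b a t ≤ betaWeight a b t := by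
  have ht₀ : 0 < t := by linarith [ht.1]
  have ht₁ : 0 < 1 - t := sub_pos.2 ht.2
  have hpow : (1 - t) ^ (a - b) ≤ t ^ (a - b) :=
    Real.rpow_le_rpow ht₁.le (by linarith [ht.1]) (sub_nonneg.2 hab)
  have hsplit : a - 1 = b - 1 + (a - b) := by ring
  calc betaWeight b a t
      = betaWeight b b t * (1 - t) ^ (a - b) := by
        rw [betaWeight, betaWeight, hsplit, Real.rpow_add ht₁, mul_assoc]
    _ ≤ betaWeight b b t * t ^ (a - b) :=
        mul_le_mul_of_nonneg_left hpow (betaWeight_pos b b ⟨ht₀, ht.2⟩).le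
    _ = betaWeight a b t := by
        rw [betaWeight, betaWeight, hsplit, Real.rpow_add ht₀, mul_right_comm]

lemma intervalIntegrable_betaWeight (ha : 0 < a) (hb : 0 < b) (hx : x ∈ Icc 0 1)
    (hy : y ∈ Icc 0 1) : IntervalIntegrable (betaWeight a b) volume x y := by
  have hunit : IntervalIntegrable (betaWeight a b) volume 0 1 := by
    have hcomplex := Complex.betaIntegral_convergent (u := a) (v := b) (by simpa) (by simpa)
    rw [intervalIntegrable_iff_integrableOn_Ioc_of_le zero_le_one] at hcomplex ⊢
    refine IntegrableOn.congr_fun hcomplex.re (fun t ht ↦ ?_) measurableSet_Ioc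
    simp only [← ofReal_betaWeight a b (Ioc_subset_Icc_self ht), RCLike.re_to_complex,
      Complex.ofReal_re]
  refine hunit.mono_set ?_
  rw [uIcc_of_le zero_le_one]
  exact uIcc_subset_Icc hx hy

end betaWeight

section upperBeta

variable {a b x : ℝ}

lemma integral_betaWeight_eq_upperBeta_one_sub (a b x : ℝ) :
    ∫ t in 0..x, betaWeight a b t = upperBeta b a (1 - x) := by
  simpa only [betaWeight_one_sub, sub_zero, upperBeta] using
    intervalIntegral.integral_comp_sub_left (a := 0) (b := x) (betaWeight b a) 1

lemma upperBeta_add_upperBeta_one_sub (ha : 0 < a) (hb : 0 < b) (hx : x ∈ Icc 0 1) :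
    upperBeta a b x + upperBeta b a (1 - x) = betaFn a b := by
  rw [← integral_betaWeight_eq_upperBeta_one_sub, add_comm]
  exact intervalIntegral.integral_add_adjacent_intervals
    (intervalIntegrable_betaWeight ha hb (by simp) hx)
    (intervalIntegrable_betaWeight ha hb hx (by simp))

lemma upperBeta_add_one_add_upperBeta_add_one (ha : 0 < a) (hb : 0 < b) (hx : x ∈ Icc 0 1) :
    upperBeta (a + 1) b x + upperBeta a (b + 1) x = upperBeta a b x := by
  have h_one : (1 : ℝ) ∈ Icc 0 1 := by simp
  rw [upperBeta, upperBeta, ← intervalIntegral.integral_add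
    (intervalIntegrable_betaWeight (by positivity) hb hx h_one)
    (intervalIntegrable_betaWeight ha (by positivity) hx h_one)]
  refine intervalIntegral.integral_congr_Ioo_of_le hx.2 fun t ht ↦ ?_
  simp only [betaWeight_add_one_left a b (hx.1.trans_lt ht.1).ne',
    betaWeight_add_one_right a b ht.2.ne]
  ring

lemma upperBeta_half_le_upperBeta_half_swap (ha : 0 < a) (hb : 0 < b) (hab : b ≤ a) :
    upperBeta b a (1 / 2) ≤ upperBeta a b (1 / 2) := by
  have h_half : (1 / 2 : ℝ) ∈ Icc 0 1 := by norm_num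
  have h_one : (1 : ℝ) ∈ Icc 0 1 := by simp
  exact intervalIntegral.integral_mono_on_of_le_Ioo h_half.2
    (intervalIntegrable_betaWeight hb ha h_half h_one)
    (intervalIntegrable_betaWeight ha hb h_half h_one)
    fun t ht ↦ betaWeight_le_betaWeight_swap hab (Ioo_subset_Ico_self ht)

end upperBeta

section betaFn

variable {a b : ℝ}

lemma betaFn_comm (a b : ℝ) : betaFn a b = betaFn b a :=
  calc betaFn a b = upperBeta b a (1 - 1) := integral_betaWeight_eq_upperBeta_one_sub a b 1
    _ = betaFn b a := by rw [sub_self, upperBeta_zero]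

lemma betaFn_pos (ha : 0 < a) (hb : 0 < b) : 0 < betaFn a b :=
  intervalIntegral.intervalIntegral_pos_of_pos_on
    (intervalIntegrable_betaWeight ha hb (by simp) (by simp))
    (fun _ ↦ betaWeight_pos a b) one_pos

lemma ofReal_betaFn (a b : ℝ) : (betaFn a b : ℂ) = Complex.betaIntegral a b := by
  rw [betaFn, Complex.betaIntegral, ← intervalIntegral.integral_ofReal]
  refine intervalIntegral.integral_congr fun t ht ↦ ?_
  rw [uIcc_of_le zero_le_one] at ht
  exact ofReal_betaWeight a b ht

lemma mul_betaFn_add_one_right (ha : 0 < a) (hb : 0 < b) :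
    a * betaFn a (b + 1) = b * betaFn (a + 1) b := by
  have h := Complex.betaIntegral_recurrence (u := a) (v := b) (by simpa) (by simpa)
  rw [← Complex.ofReal_one, ← Complex.ofReal_add, ← Complex.ofReal_add, ← ofReal_betaFn,
    ← ofReal_betaFn] at h
  exact_mod_cast h

lemma betaFn_add_one_left (ha : 0 < a) (hb : 0 < b) :
    betaFn (a + 1) b = a / (a + b) * betaFn a b := by
  have hrec := mul_betaFn_add_one_right ha hb
  have hsplit : betaFn (a + 1) b + betaFn a (b + 1) = betaFn a b := by
    simpa only [upperBeta_zero] using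
      upperBeta_add_one_add_upperBeta_add_one (x := 0) ha hb (by simp)
  rw [div_mul_eq_mul_div, eq_div_iff (by positivity), ← hsplit]
  linear_combination -hrec

lemma betaFn_add_one_right (ha : 0 < a) (hb : 0 < b) :
    betaFn a (b + 1) = b / (a + b) * betaFn a b := by
  rw [betaFn_comm, betaFn_add_one_left hb ha, betaFn_comm b a, add_comm b a]

end betaFn

section I

variable {a b : ℝ}

lemma I_add_I_swap (ha : 0 < a) (hb : 0 < b) : I a b + I b a = 1 := by
  have hsum := upperBeta_add_upperBeta_one_sub (x := 1 / 2) ha hb (by norm_num)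
  rw [sub_half] at hsum
  rw [I_eq_upperBeta_div, I_eq_upperBeta_div, betaFn_comm b a, ← add_div, hsum,
    div_self (betaFn_pos ha hb).ne']

lemma half_le_I (ha : 0 < a) (hb : 0 < b) (hab : b ≤ a) : 1 / 2 ≤ I a b := by
  have hswap : I b a ≤ I a b := by
    rw [I_eq_upperBeta_div, I_eq_upperBeta_div, betaFn_comm b a]
    exact div_le_div_of_nonneg_right (upperBeta_half_le_upperBeta_half_swap ha hb hab)
      (betaFn_pos ha hb).le
  linarith [I_add_I_swap ha hb]

lemma I_eq_weighted_average (ha : 0 < a) (hb : 0 < b) :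
    I a b = a / (a + b) * I (a + 1) b + b / (a + b) * I a (b + 1) := by
  have hB := (betaFn_pos ha hb).ne'
  have hleft : a / (a + b) * I (a + 1) b = upperBeta (a + 1) b (1 / 2) / betaFn a b := by
    rw [I_eq_upperBeta_div, betaFn_add_one_left ha hb]
    field_simp
  have hright : b / (a + b) * I a (b + 1) = upperBeta a (b + 1) (1 / 2) / betaFn a b := by
    rw [I_eq_upperBeta_div, betaFn_add_one_right ha hb]
    field_simp
  rw [hleft, hright, ← add_div,
    upperBeta_add_one_add_upperBeta_add_one ha hb (by norm_num), ← I_eq_upperBeta_div]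

end I

section R

variable {a b x : ℝ}

lemma hFn_one_sub (x : ℝ) : hFn (1 - x) = hFn x := by
  rw [hFn, hFn, sub_sub_cancel, max_comm]

lemma hFn_of_half_le (hx : 1 / 2 ≤ x) : hFn x = x := max_eq_left (by linarith)

lemma hFn_I_comm (ha : 0 < a) (hb : 0 < b) : hFn (I a b) = hFn (I b a) := by
  rw [← hFn_one_sub, ← I_add_I_swap ha hb, add_sub_cancel_left]

lemma R_comm (ha : 0 < a) (hb : 0 < b) : R a b = R b a := by
  rw [R, R, hFn_I_comm (a := a + 1) (by positivity) hb, hFn_I_comm ha hb,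
    hFn_I_comm (b := b + 1) ha (by positivity), add_comm b a, add_comm]

lemma R_eq_zero_of_add_one_le (hb : 0 < b) (hab : b + 1 ≤ a) : R a b = 0 := by
  have ha : 0 < a := by linarith
  have hweights : a / (a + b) + b / (a + b) = 1 := by
    rw [← add_div, div_self (by positivity)]
  rw [R, hFn_of_half_le (half_le_I (by positivity) hb (by linarith)),
    hFn_of_half_le (half_le_I ha hb (by linarith)),
    hFn_of_half_le (half_le_I ha (by positivity) hab)]
  linear_combination -I_eq_weighted_average ha hb - I a b * hweights

end R

theorem R_eq_zero_of_ne_general {a b : ℝ} (ha : 0 < a) (hb : 0 < b) (hab : 1 ≤ |a - b|) :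
    R a b = 0 := by
  rcases le_abs'.1 hab with h | h
  · rw [R_comm ha hb]
    exact R_eq_zero_of_add_one_le ha (by linarith)
  · exact R_eq_zero_of_add_one_le hb (by linarith)

theorem R_eq_zero_of_ne (a b : ℕ) (ha : 0 < a) (hb : 0 < b) (hab : a ≠ b) :
    R a b = 0 :=
  R_eq_zero_of_ne_general (Nat.cast_pos.2 ha) (Nat.cast_pos.2 hb) <| by
    exact_mod_cast Int.one_le_abs (z := (a : ℤ) - b) (by omega)
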